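/- The elliptic curve E: y² = x³ − 3483x + 121014 defined over ℚ has a ℚ-rational torsion point of exact order 7. -/

import Mathlib

open WeierstrassCurve

noncomputable section

/-- The curve. -/
abbrev curveSeven : WeierstrassCurve.Affine ℚ :=
  ({ a₁ := 0, a₂ := 0, a₃ := 0, a₄ := -3483, a₆ := 121014 } : WeierstrassCurve ℚ).toAffine

lemma double_step {x y x' y' : ℚ} (l : ℚ) (h : curveSeven.Nonsingular x y)
    (h' : curveSeven.Nonsingular x' y') (hy : y ≠ 0) (hl : l * (2 * y) = 3 * x ^ 2 - 3483)
    (hx' : x' = l ^ 2 - 2 * x) (hy' : y' = -(y + l * (x' - x))) :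
    (Affine.Point.some x y h : curveSeven.Point) + Affine.Point.some x y h
      = Affine.Point.some x' y' h' := by
  have hne : y ≠ curveSeven.negY x y := by
    simp only [Affine.negY]
    intro h0
    apply hy
    linarith
  have hs : curveSeven.slope x x y y = l := by
    rw [Affine.slope_of_Y_ne rfl hne]
    have h2 : y - curveSeven.negY x y ≠ 0 := sub_ne_zero.mpr hne
    rw [div_eq_iff h2]
    simp only [Affine.negY]
    linarith
  rw [Affine.Point.add_self_of_Y_ne hne]
  simp only [Affine.Point.some.injEq]
  rw [hs]
  simp only [Affine.addX, Affine.addY, Affine.negAddY, Affine.negY]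
  subst hy' hx'
  constructor <;> ring

/-- The elliptic curve `E : y² = x³ − 3483x + 121014` over `ℚ` has a
`ℚ`-rational torsion point of exact order `7`. -/
theorem exists_rational_point_of_order_seven :
    ∃ P : WeierstrassCurve.Affine.Point
      ({ a₁ := 0, a₂ := 0, a₃ := 0, a₄ := -3483, a₆ := 121014 } : WeierstrassCurve ℚ).toAffine,
      addOrderOf P = 7 := by
  have n1 : curveSeven.Nonsingular 27 216 := by
    rw [Affine.nonsingular_iff, Affine.equation_iff]; norm_num [curveSeven]
  have n2 : curveSeven.Nonsingular (-45) (-432) := by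
    rw [Affine.nonsingular_iff, Affine.equation_iff]; norm_num [curveSeven]
  have n4 : curveSeven.Nonsingular 99 864 := by
    rw [Affine.nonsingular_iff, Affine.equation_iff]; norm_num [curveSeven]
  have e1 := double_step (-3) n1 n2 (by norm_num) (by norm_num) (by norm_num) (by norm_num)
  have e2 := double_step (-3) n2 n4 (by norm_num) (by norm_num) (by norm_num) (by norm_num)
  have e3 := double_step 15 n4 n1 (by norm_num) (by norm_num) (by norm_num) (by norm_num)
  have : Fact (Nat.Prime 7) := ⟨by norm_num⟩
  refine ⟨(Affine.Point.some 27 216 n1 : curveSeven.Point), addOrderOf_eq_prime ?_ ?_⟩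
  · rw [← e2, ← e1] at e3
    generalize (Affine.Point.some 27 216 n1 : curveSeven.Point) = P at e3
    have h8 : (7 : ℕ) • P + P = 0 + P := by
      rw [zero_add]
      refine Eq.trans ?_ e3
      abel
    exact add_right_cancel h8
  · exact Affine.Point.some_ne_zero _

end
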